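/- arXiv:2104.06501 — 2 statements merged into one kernel-verified Lean document; each statement's English description precedes it below -/
import Mathlib

section
/- Every nonempty finite subset A of a field F is a Sidon set for the binary form x₁ + cx₂ for all but finitely many c ∈ F \ {0}; that is, the exceptional set E(A) = {c ∈ F \ {0} : A is not a Sidon set for x₁ + cx₂} is finite. -/
/-!
A collision `a₁ + c a₂ = a₁' + c a₂'` says that `c` maps the difference `a₂ - a₂'` to the
difference `a₁' - a₁`, and it is nontrivial exactly when `a₂ ≠ a₂'`. So `A` fails to be Sidon
precisely when `c` maps some nonzero element of `A - A` into `A - A`. For finite `A` there are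
finitely many pairs of differences, and absence of torsion leaves at most one `c` for each pair.
-/

open scoped Pointwise

section

variable {R M : Type*}

/-- `A` is a Sidon set for the binary linear form `x₁ + c x₂`, whose coefficient `c` may act on the
ambient additive structure `M` by scalar multiplication; the form of the paper is the case `R = M`.
-/
def IsSidonFor [Add M] [SMul R M] (c : R) (A : Set M) : Prop :=
  ∀ a₁ ∈ A, ∀ a₂ ∈ A, ∀ a₁' ∈ A, ∀ a₂' ∈ A,
    a₁ + c • a₂ = a₁' + c • a₂' → a₁ = a₁' ∧ a₂ = a₂'

theorem add_smul_eq_add_smul_iff_smul_sub_eq_sub [AddCommGroup M] [DistribSMul R M] {c : R}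
    {a₁ a₂ a₁' a₂' : M} :
    a₁ + c • a₂ = a₁' + c • a₂' ↔ c • (a₂ - a₂') = a₁' - a₁ := by
  rw [smul_sub, sub_eq_sub_iff_add_eq_add, add_comm a₁]

theorem isSidonFor_iff_forall_mem_sub [AddCommGroup M] [DistribSMul R M] {c : R} {A : Set M} :
    IsSidonFor c A ↔ ∀ d ∈ A - A, c • d ∈ A - A → d = 0 := by
  constructor
  · rintro hA _ ⟨a₂, ha₂, a₂', ha₂', rfl⟩ ⟨a₁', ha₁', a₁, ha₁, h⟩
    have collision := add_smul_eq_add_smul_iff_smul_sub_eq_sub.mpr h.symm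
    exact sub_eq_zero.mpr (hA a₁ ha₁ a₂ ha₂ a₁' ha₁' a₂' ha₂' collision).2
  · intro hA a₁ ha₁ a₂ ha₂ a₁' ha₁' a₂' ha₂' collision
    have h := add_smul_eq_add_smul_iff_smul_sub_eq_sub.mp collision
    obtain rfl : a₂ = a₂' := sub_eq_zero.mp <|
      hA _ (Set.sub_mem_sub ha₂ ha₂') (h ▸ Set.sub_mem_sub ha₁' ha₁)
    exact ⟨add_right_cancel collision, rfl⟩

theorem setOf_not_isSidonFor_eq_biUnion [AddCommGroup M] [DistribSMul R M] (A : Set M) :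
    {c : R | ¬ IsSidonFor c A} = ⋃ d ∈ (A - A) \ {0}, (· • d) ⁻¹' (A - A) := by
  ext c
  simp only [isSidonFor_iff_forall_mem_sub, Set.mem_ofPred_eq, Set.mem_iUnion, Set.mem_preimage,
    Set.mem_sdiff, Set.mem_singleton_iff, not_forall, exists_prop, and_assoc]
  exact exists_congr fun _ ↦ and_congr_right fun _ ↦ and_comm

theorem exceptional_set_finite_general [Ring R] [IsCancelMulZero R] [AddCommGroup M] [Module R M]
    [Module.IsTorsionFree R M] {A : Set M} (hA : A.Finite) :
    {c : R | ¬ IsSidonFor c A}.Finite := by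
  have hdiff : (A - A).Finite := hA.sub hA
  rw [setOf_not_isSidonFor_eq_biUnion]
  exact hdiff.sdiff.biUnion fun _ hd ↦ hdiff.preimage (smul_left_injective R hd.2).injOn

end

/-- For every nonempty finite subset `A` of a field `F`, the exceptional set
`E(A) = {c ∈ F \ {0} : A is not a Sidon set for x₁ + cx₂}` is finite. -/
theorem exceptional_set_finite
    (F : Type*) [Field F] (A : Set F) (hA : A.Nonempty) (hfin : A.Finite) :
    {c : F | c ≠ 0 ∧ ¬ (∀ a₁ ∈ A, ∀ a₂ ∈ A, ∀ a₁' ∈ A, ∀ a₂' ∈ A,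
      a₁ + c * a₂ = a₁' + c * a₂' → a₁ = a₁' ∧ a₂ = a₂')}.Finite :=
  (exceptional_set_finite_general hfin).subset fun _ hc ↦ hc.2
end

section
/- Let F be a field and let A = {0, 1, a} ⊆ F with a ≠ 0 and a ≠ 1. Then E(A) = E(1) ∪ E(a) ∪ E(a−1) ∪ E((a−1)/a), where E(c) = {c, −c, 1/c, −1/c}; that is, for c ∈ F \ {0}, the set {0, 1, a} fails to be a Sidon set for the binary form x₁ + cx₂ if and only if c ∈ {±1, ±a, ±1/a, ±(a−1), ±1/(a−1), ±(a−1)/a, ±a/(a−1)}. -/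
/-- The exceptional set `E(A)`: the set of nonzero `c` such that `A` is not a Sidon set for
the binary linear form `x₁ + cx₂`. -/
def sidonExceptionalSet {F : Type*} [Field F] (A : Set F) : Set F :=
  {c : F | c ≠ 0 ∧ ¬ (∀ a₁ ∈ A, ∀ a₂ ∈ A, ∀ a₁' ∈ A, ∀ a₂' ∈ A,
    a₁ + c * a₂ = a₁' + c * a₂' → a₁ = a₁' ∧ a₂ = a₂')}

/-- `E(c) = {c, −c, 1/c, −1/c}` for a nonzero field element `c`. -/
def quadE {F : Type*} [Field F] (c : F) : Set F := {c, -c, c⁻¹, -c⁻¹}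

/-!
A collision `x + c * y = x' + c * y'` between distinct pairs says that `c = (x' - x) / (y - y')`,
so `E(A)` is the set of ratios of nonzero differences of `A`. A three-element set has three nonzero
differences `p, q, r` up to sign, whose ratios are, again up to sign, `1`, `q / p`, `r / p`,
`r / q` and their inverses.
-/

open scoped Pointwise

theorem sidonExceptionalSet_eq_div {F : Type*} [Field F] (A : Set F) :
    sidonExceptionalSet A = ((A - A) \ {0}) / ((A - A) \ {0}) := by
  ext c
  constructor
  · rintro ⟨hc, hA⟩
    push Not at hA
    obtain ⟨x, hx, y, hy, x', hx', y', hy', h, hne⟩ := hA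
    have hdiff : x' - x = c * (y - y') := by linear_combination -h
    have hy_ne : y - y' ≠ 0 := by
      intro hyy
      refine hne (sub_eq_zero.1 ?_).symm (sub_eq_zero.1 hyy)
      rw [hdiff, hyy, mul_zero]
    have hx_ne : x' - x ≠ 0 := hdiff ▸ mul_ne_zero hc hy_ne
    exact ⟨x' - x, ⟨Set.sub_mem_sub hx' hx, hx_ne⟩, y - y', ⟨Set.sub_mem_sub hy hy', hy_ne⟩,
      (eq_div_of_mul_eq hy_ne hdiff.symm).symm⟩
  · rintro ⟨_, ⟨⟨x', hx', x, hx, rfl⟩, hx_ne⟩, _, ⟨⟨y, hy, y', hy', rfl⟩, hy_ne⟩, rfl⟩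
    refine ⟨div_ne_zero hx_ne hy_ne, fun hA => hy_ne ?_⟩
    have hdiff : (x' - x) / (y - y') * (y - y') = x' - x := div_mul_cancel₀ _ hy_ne
    exact sub_eq_zero.2 (hA x hx y hy x' hx' y' hy' (by linear_combination hdiff)).2

theorem triple_sub_triple_sdiff_zero {G : Type*} [AddGroup G] {x y z : G}
    (hxy : x ≠ y) (hxz : x ≠ z) (hyz : y ≠ z) :
    (({x, y, z} : Set G) - {x, y, z}) \ {0} =
      {y - x, z - x, z - y} ∪ -{y - x, z - x, z - y} := by
  ext d
  simp only [Set.mem_sdiff, Set.mem_sub, Set.mem_union, Set.mem_neg, Set.mem_insert_iff,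
    Set.mem_singleton_iff, exists_eq_or_imp, exists_eq_left, neg_eq_iff_eq_neg, neg_sub, sub_self]
  grind [sub_eq_zero]

theorem union_neg_div_union_neg {G : Type*} [DivisionMonoid G] [HasDistribNeg G] (S T : Set G) :
    (S ∪ -S) / (T ∪ -T) = S / T ∪ -(S / T) := by
  simp only [Set.union_div, Set.div_union, neg_div, div_neg, neg_neg, Set.union_neg]
  ext
  simp only [Set.mem_union]
  tauto

theorem quadE_eq_union_neg {F : Type*} [Field F] (c : F) :
    quadE c = {c, c⁻¹} ∪ -{c, c⁻¹} := by
  ext d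
  simp only [quadE, Set.neg_insert, Set.neg_singleton, Set.mem_union, Set.mem_insert_iff,
    Set.mem_singleton_iff]
  tauto

theorem triple_div_triple {G : Type*} [GroupWithZero G] {p q r : G}
    (hp : p ≠ 0) (hq : q ≠ 0) (hr : r ≠ 0) :
    ({p, q, r} : Set G) / {p, q, r} =
      {1} ∪ {q / p, (q / p)⁻¹} ∪ {r / p, (r / p)⁻¹} ∪ {r / q, (r / q)⁻¹} := by
  ext d
  simp only [Set.mem_div, Set.mem_union, Set.mem_insert_iff, Set.mem_singleton_iff,
    exists_eq_or_imp, exists_eq_left, div_self hp, div_self hq, div_self hr, inv_div]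
  grind

theorem exceptional_set_three_element_general {F : Type*} [Field F] {x y z : F}
    (hxy : x ≠ y) (hxz : x ≠ z) (hyz : y ≠ z) :
    sidonExceptionalSet ({x, y, z} : Set F) =
      quadE (1 : F) ∪ quadE ((z - x) / (y - x)) ∪ quadE ((z - y) / (y - x)) ∪
        quadE ((z - y) / (z - x)) := by
  rw [sidonExceptionalSet_eq_div, triple_sub_triple_sdiff_zero hxy hxz hyz,
    union_neg_div_union_neg,
    triple_div_triple (sub_ne_zero.2 hxy.symm) (sub_ne_zero.2 hxz.symm) (sub_ne_zero.2 hyz.symm)]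
  simp only [quadE_eq_union_neg, inv_one, Set.pair_eq_singleton, Set.union_neg,
    Set.union_union_union_comm]

/-- For `A = {0, 1, a}` with `a ≠ 0`, `a ≠ 1`,
`E(A) = E(1) ∪ E(a) ∪ E(a−1) ∪ E((a−1)/a)`. -/
theorem exceptional_set_three_element
    (F : Type*) [Field F] (a : F) (ha0 : a ≠ 0) (ha1 : a ≠ 1) :
    sidonExceptionalSet ({0, 1, a} : Set F) =
      quadE (1 : F) ∪ quadE a ∪ quadE (a - 1) ∪ quadE ((a - 1) / a) := by
  simpa only [sub_zero, div_one] using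
    exceptional_set_three_element_general zero_ne_one ha0.symm ha1.symm
end
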